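/- Let α, β, μ, θ > 0 be real constants and L₁, L₂ > 0. Suppose u : ℝ × ℝ × ℝ → ℝ, (t,x,y) ↦ u(t,x,y), is infinitely differentiable, L₁-periodic in x and L₂-periodic in y, and satisfies the two-dimensional regularized long-wave equation ∂ₜu + α ∂ₓu + β ∂ᵧu + α u ∂ₓu + β u ∂ᵧu − μ ∂ₓₓₜu − θ ∂ᵧᵧₜu = 0 for all t, x, y. Then the Hamiltonian energy H(t) = ∫₀^{L₁} ∫₀^{L₂} ( ½ u² + (1/6) u³ ) dy dx is constant in t. -/

import Mathlib

open intervalIntegral MeasureTheory Set Filter Topology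

/-- differentiation under the integral over a compact set -/
lemma rlw_hasDerivAt (S : Set (ℝ × ℝ)) (hS : IsCompact S) (G G' : ℝ → ℝ × ℝ → ℝ)
    (hG : Continuous (fun p : ℝ × (ℝ × ℝ) => G p.1 p.2))
    (hG' : Continuous (fun p : ℝ × (ℝ × ℝ) => G' p.1 p.2))
    (hd : ∀ s z, HasDerivAt (fun s => G s z) (G' s z) s) (s₀ : ℝ) :
    HasDerivAt (fun s => ∫ z in S, G s z) (∫ z in S, G' s₀ z) s₀ := by
  obtain ⟨C, hC⟩ := ((isCompact_closedBall s₀ 1).prod hS).exists_bound_of_continuousOn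
    hG'.continuousOn
  have c1 : ∀ s, Continuous (G s) := fun s => hG.comp (by fun_prop : Continuous fun z => (s, z))
  have c2 : ∀ s, Continuous (G' s) := fun s => hG'.comp (by fun_prop : Continuous fun z => (s, z))
  have hfin : volume S < ⊤ := hS.measure_lt_top
  refine (hasDerivAt_integral_of_dominated_loc_of_deriv_le (μ := volume.restrict S)
    (F := G) (F' := G') (bound := fun _ => C) (s := Metric.closedBall s₀ 1)
    (Metric.closedBall_mem_nhds s₀ one_pos) ?_ ?_ ?_ ?_ ?_ ?_).2
  · exact Eventually.of_forall fun s => (c1 s).aestronglyMeasurable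
  · exact (c1 s₀).continuousOn.integrableOn_compact hS
  · exact (c2 s₀).aestronglyMeasurable
  · refine (ae_restrict_iff' hS.measurableSet).2 (Eventually.of_forall ?_)
    intro z hz s hs
    exact hC (s, z) ⟨hs, hz⟩
  · exact continuousOn_const.integrableOn_compact hS
  · exact Eventually.of_forall fun z s _ => hd s z

/-- the period cell -/
def rlwCell (L₁ L₂ : ℝ) : Set (ℝ × ℝ) := Icc 0 L₁ ×ˢ Icc 0 L₂

lemma rlwCell_compact (L₁ L₂ : ℝ) : IsCompact (rlwCell L₁ L₂) := isCompact_Icc.prod isCompact_Icc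

lemma rlw_iter (L₁ L₂ : ℝ) (hL₁ : 0 < L₁) (hL₂ : 0 < L₂) (g : ℝ × ℝ → ℝ) (hg : Continuous g) :
    ∫ z in rlwCell L₁ L₂, g z = ∫ x in (0:ℝ)..L₁, ∫ y in (0:ℝ)..L₂, g (x, y) := by
  rw [intervalIntegral.integral_of_le hL₁.le, ← integral_Icc_eq_integral_Ioc]
  simp_rw [intervalIntegral.integral_of_le hL₂.le, ← integral_Icc_eq_integral_Ioc]
  exact setIntegral_prod _ (hg.continuousOn.integrableOn_compact (rlwCell_compact L₁ L₂))

/-- double periodicity -/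
def rlwPer (L₁ L₂ : ℝ) (g : ℝ × ℝ → ℝ) : Prop :=
  (∀ x y, g (x + L₁, y) = g (x, y)) ∧ (∀ x y, g (x, y + L₂) = g (x, y))

lemma rlw_interval_shift (L : ℝ) (h : ℝ → ℝ) (hp : ∀ x, h (x + L) = h x) (a : ℝ) :
    ∫ x in (0:ℝ)..L, h (x + a) = ∫ x in (0:ℝ)..L, h x := by
  have hp' : Function.Periodic h L := hp
  rw [intervalIntegral.integral_comp_add_right]
  have := hp'.intervalIntegral_add_eq a 0
  simpa [add_comm] using this

lemma rlw_shift (L₁ L₂ : ℝ) (hL₁ : 0 < L₁) (hL₂ : 0 < L₂) (g : ℝ × ℝ → ℝ) (hg : Continuous g)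
    (hp : rlwPer L₁ L₂ g) (a : ℝ × ℝ) :
    ∫ z in rlwCell L₁ L₂, g (z + a) = ∫ z in rlwCell L₁ L₂, g z := by
  rw [rlw_iter _ _ hL₁ hL₂ g hg, rlw_iter _ _ hL₁ hL₂ (fun z => g (z + a)) (by fun_prop)]
  have h1 : ∀ x, ∫ y in (0:ℝ)..L₂, g ((x, y) + a) = ∫ y in (0:ℝ)..L₂, g (x + a.1, y) := by
    intro x
    exact rlw_interval_shift L₂ (fun y => g (x + a.1, y)) (fun y => hp.2 _ _) a.2
  simp_rw [h1]
  exact rlw_interval_shift L₁ (fun x => ∫ y in (0:ℝ)..L₂, g (x, y))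
    (fun x => by simp_rw [hp.1]) a.1

lemma rlw_line (g : ℝ × ℝ → ℝ) (hg : ContDiff ℝ (⊤ : ℕ∞) g) (z e : ℝ × ℝ) (s : ℝ) :
    HasDerivAt (fun s : ℝ => g (z + s • e)) (fderiv ℝ g (z + s • e) e) s := by
  have h1 : HasFDerivAt g (fderiv ℝ g (z + s • e)) (z + s • e) :=
    (hg.differentiable (by simp) _).hasFDerivAt
  have h2 : HasDerivAt (fun s : ℝ => z + s • e) e s := by
    simpa using ((hasDerivAt_id s).smul_const e).const_add z
  exact h1.comp_hasDerivAt s h2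

lemma rlw_smooth {E : Type*} [NormedAddCommGroup E] [NormedSpace ℝ E] (g : E → ℝ)
    (hg : ContDiff ℝ (⊤ : ℕ∞) g) (e : E) :
    ContDiff ℝ (⊤ : ℕ∞) (fun z => fderiv ℝ g z e) :=
  (hg.fderiv_right (m := (⊤ : ℕ∞)) (by simp)).clm_apply contDiff_const

lemma rlw_div (L₁ L₂ : ℝ) (hL₁ : 0 < L₁) (hL₂ : 0 < L₂) (g : ℝ × ℝ → ℝ)
    (hg : ContDiff ℝ (⊤ : ℕ∞) g) (hp : rlwPer L₁ L₂ g) (e : ℝ × ℝ) :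
    ∫ z in rlwCell L₁ L₂, fderiv ℝ g z e = 0 := by
  have c := hg.continuous
  have c' := (rlw_smooth g hg e).continuous
  have h := rlw_hasDerivAt (rlwCell L₁ L₂) (rlwCell_compact _ _) (fun s z => g (z + s • e))
    (fun s z => fderiv ℝ g (z + s • e) e) (by fun_prop)
    (c'.comp (by fun_prop : Continuous fun p : ℝ × (ℝ × ℝ) => p.2 + p.1 • e))
    (fun s z => rlw_line g hg z e s) 0
  simp_rw [rlw_shift L₁ L₂ hL₁ hL₂ g c hp] at h
  simpa using h.unique (hasDerivAt_const _ _)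

/-- second derivative at a global max cannot be positive -/
lemma rlw_second (h h' : ℝ → ℝ) (c : ℝ) (h1 : ∀ s, HasDerivAt h (h' s) s)
    (h2 : HasDerivAt h' c 0) (hmax : ∀ s, h s ≤ h 0) : c ≤ 0 := by
  by_contra! hc
  have e1 : deriv h = h' := funext fun s => (h1 s).deriv
  have hlm : IsLocalMax h 0 := Eventually.of_forall hmax
  have hz : deriv h 0 = 0 := hlm.deriv_eq_zero
  have hmin : IsLocalMin h 0 := isLocalMin_of_deriv_deriv_pos (by rw [e1, h2.deriv]; exact hc) hz
    (h1 0).continuousAt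
  have hev : h =ᶠ[𝓝 0] fun _ => h 0 := by
    filter_upwards [hmin] with s hs using le_antisymm (hmax s) hs
  have hev2 : deriv h =ᶠ[𝓝 0] deriv (fun _ => h 0) := hev.deriv
  rw [e1] at hev2
  have := hev2.deriv_eq
  rw [h2.deriv] at this
  simp at this
  linarith

lemma rlw_exists_max (L₁ L₂ : ℝ) (hL₁ : 0 < L₁) (hL₂ : 0 < L₂) (E : ℝ × ℝ → ℝ)
    (hE : Continuous E) (hp : rlwPer L₁ L₂ E) : ∃ a, ∀ b, E b ≤ E a := by
  obtain ⟨a, -, ha⟩ := (rlwCell_compact L₁ L₂).exists_isMaxOn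
    ⟨(0, 0), ⟨⟨le_rfl, hL₁.le⟩, ⟨le_rfl, hL₂.le⟩⟩⟩ hE.continuousOn
  refine ⟨a, fun b => ?_⟩
  obtain ⟨x, y⟩ := b
  have px : Function.Periodic (fun x => E (x, y)) L₁ := fun x => hp.1 x y
  obtain ⟨x', hx', ex⟩ := px.exists_mem_Ico₀ hL₁ x
  have py : Function.Periodic (fun y => E (x', y)) L₂ := fun y => hp.2 x' y
  obtain ⟨y', hy', ey⟩ := py.exists_mem_Ico₀ hL₂ y
  rw [show E (x, y) = E (x', y) from ex, show E (x', y) = E (x', y') from ey]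
  exact ha (⟨⟨hx'.1, hx'.2.le⟩, ⟨hy'.1, hy'.2.le⟩⟩ : (x', y') ∈ rlwCell L₁ L₂)

lemma rlw_maxprin (μ θ L₁ L₂ : ℝ) (hμ : 0 < μ) (hθ : 0 < θ) (hL₁ : 0 < L₁) (hL₂ : 0 < L₂)
    (E : ℝ × ℝ → ℝ) (E1 E2 : ℝ × ℝ → ℝ × ℝ → ℝ)
    (hE : Continuous E) (hp : rlwPer L₁ L₂ E)
    (h1 : ∀ a e s, HasDerivAt (fun s : ℝ => E (a + s • e)) (E1 e (a + s • e)) s)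
    (h2 : ∀ a e s, HasDerivAt (fun s : ℝ => E1 e (a + s • e)) (E2 e (a + s • e)) s)
    (heq : ∀ a, E a = μ * E2 (1, 0) a + θ * E2 (0, 1) a) : ∀ a, E a ≤ 0 := by
  obtain ⟨a, ha⟩ := rlw_exists_max L₁ L₂ hL₁ hL₂ E hE hp
  have key : ∀ e, E2 e a ≤ 0 := fun e => by
    have := rlw_second (fun s : ℝ => E (a + s • e)) (fun s => E1 e (a + s • e))
      (E2 e (a + (0:ℝ) • e)) (h1 a e) (h2 a e 0) (fun s => by simpa using ha _)
    simpa using this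
  intro b
  have := heq a
  nlinarith [ha b, mul_nonneg hμ.le (neg_nonneg.2 (key (1,0))),
    mul_nonneg hθ.le (neg_nonneg.2 (key (0,1)))]

lemma rlw_core (α β μ θ L₁ L₂ : ℝ) (hμ : 0 < μ) (hθ : 0 < θ) (hL₁ : 0 < L₁) (hL₂ : 0 < L₂)
    (f w : ℝ × ℝ → ℝ) (hf : ContDiff ℝ (⊤ : ℕ∞) f) (hw : ContDiff ℝ (⊤ : ℕ∞) w)
    (pf : rlwPer L₁ L₂ f) (pw : rlwPer L₁ L₂ w)
    (hpde : ∀ z, w z - μ * fderiv ℝ (fun z => fderiv ℝ w z (1, 0)) z (1, 0)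
      - θ * fderiv ℝ (fun z => fderiv ℝ w z (0, 1)) z (0, 1) = - fderiv ℝ f z (α, β)) :
    ∫ z in rlwCell L₁ L₂, f z * w z = 0 := by
  set S := rlwCell L₁ L₂ with hSdef
  have hS : IsCompact S := rlwCell_compact _ _
  have cf := hf.continuous
  -- generic derivative of the correlation
  have gen : ∀ (g : ℝ × ℝ → ℝ) (_ : ContDiff ℝ (⊤ : ℕ∞) g) (σ : ℝ) (a e : ℝ × ℝ) (s : ℝ),
      HasDerivAt (fun s : ℝ => ∫ z in S, f z * (g (z + (a + s • e)) + σ * g (z - (a + s • e))))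
        (∫ z in S, f z * (fderiv ℝ g (z + (a + s • e)) e
          + (-σ) * fderiv ℝ g (z - (a + s • e)) e)) s := by
    intro g hg σ a e s
    have cg := hg.continuous
    have cg' := (rlw_smooth g hg e).continuous
    refine rlw_hasDerivAt S hS
      (fun s z => f z * (g (z + (a + s • e)) + σ * g (z - (a + s • e))))
      (fun s z => f z * (fderiv ℝ g (z + (a + s • e)) e
          + (-σ) * fderiv ℝ g (z - (a + s • e)) e)) (by fun_prop) ?_ ?_ s
    · have k1 : Continuous fun p : ℝ × (ℝ × ℝ) => fderiv ℝ g (p.2 + (a + p.1 • e)) e :=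
        cg'.comp (by fun_prop : Continuous fun p : ℝ × (ℝ × ℝ) => p.2 + (a + p.1 • e))
      have k2 : Continuous fun p : ℝ × (ℝ × ℝ) => fderiv ℝ g (p.2 - (a + p.1 • e)) e :=
        cg'.comp (by fun_prop : Continuous fun p : ℝ × (ℝ × ℝ) => p.2 - (a + p.1 • e))
      fun_prop
    · intro s z
      have r1 := rlw_line g hg (z + a) e s
      have r2 := rlw_line g hg (z - a) (-e) s
      have q1 : ∀ s : ℝ, z + a + s • e = z + (a + s • e) := fun s => by abel
      have q2 : ∀ s : ℝ, z - a + s • (-e) = z - (a + s • e) := fun s => by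
        rw [smul_neg]; abel
      simp_rw [q1] at r1
      simp_rw [q2] at r2
      refine HasDerivAt.congr_deriv ((r1.add (r2.const_mul σ)).const_mul (f z)) ?_
      simp only [map_neg]
      ring
  let E : ℝ × ℝ → ℝ := fun a => ∫ z in S, f z * (w (z + a) + 1 * w (z - a))
  let E1 : ℝ × ℝ → ℝ × ℝ → ℝ := fun e a =>
    ∫ z in S, f z * (fderiv ℝ w (z + a) e + (-1) * fderiv ℝ w (z - a) e)
  let E2 : ℝ × ℝ → ℝ × ℝ → ℝ := fun e a =>
    ∫ z in S, f z * (fderiv ℝ (fun z => fderiv ℝ w z e) (z + a) e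
      + (-(-1)) * fderiv ℝ (fun z => fderiv ℝ w z e) (z - a) e)
  have h1 : ∀ a e s, HasDerivAt (fun s : ℝ => E (a + s • e)) (E1 e (a + s • e)) s :=
    fun a e s => gen w hw 1 a e s
  have h2 : ∀ a e s, HasDerivAt (fun s : ℝ => E1 e (a + s • e)) (E2 e (a + s • e)) s :=
    fun a e s => gen _ (rlw_smooth w hw e) (-1) a e s
  have cw := hw.continuous
  have hEc : Continuous E := by
    refine continuous_parametric_integral_of_continuous (μ := volume)
      (f := fun a z => f z * (w (z + a) + 1 * w (z - a))) ?_ hS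
    simp only [Function.uncurry_def]
    fun_prop
  have per' : ∀ x y, w (x - L₁, y) = w (x, y) := fun x y => by
    have := pw.1 (x - L₁) y; simp at this; exact this.symm
  have per'' : ∀ x y, w (x, y - L₂) = w (x, y) := fun x y => by
    have := pw.2 x (y - L₂); simp at this; exact this.symm
  have hEp : rlwPer L₁ L₂ E := by
    constructor
    · intro x y
      refine integral_congr_ae (Eventually.of_forall fun z => ?_)
      obtain ⟨p, q⟩ := z
      simp only [Prod.mk_add_mk, Prod.mk_sub_mk, ← add_assoc, ← sub_sub, pw.1, per']
    · intro x y
      refine integral_congr_ae (Eventually.of_forall fun z => ?_)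
      obtain ⟨p, q⟩ := z
      simp only [Prod.mk_add_mk, Prod.mk_sub_mk, ← add_assoc, ← sub_sub, pw.2, per'']
  -- the forcing vanishes
  have cDf := (rlw_smooth f hf (α, β)).continuous
  have intg : ∀ g : ℝ × ℝ → ℝ, Continuous g → IntegrableOn g S :=
    fun g hg => hg.continuousOn.integrableOn_compact hS
  have pDf : rlwPer L₁ L₂ (fun z => fderiv ℝ f z (α, β)) := by
    constructor
    · intro x y
      have := fderiv_comp_add_right (𝕜 := ℝ) (f := f) (x := (x, y)) ((L₁, 0) : ℝ × ℝ)
      have e : (fun z => f (z + (L₁, 0))) = f := by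
        funext z; obtain ⟨p, q⟩ := z; simpa using pf.1 p q
      rw [e] at this
      simp only [Prod.mk_add_mk, add_zero] at this
      simp only [this]
    · intro x y
      have := fderiv_comp_add_right (𝕜 := ℝ) (f := f) (x := (x, y)) ((0, L₂) : ℝ × ℝ)
      have e : (fun z => f (z + (0, L₂))) = f := by
        funext z; obtain ⟨p, q⟩ := z; simpa using pf.2 p q
      rw [e] at this
      simp only [Prod.mk_add_mk, add_zero] at this
      simp only [this]
  have forcing : ∀ a : ℝ × ℝ, ∫ z in S, f z * (fderiv ℝ f (z + a) (α, β)
      + fderiv ℝ f (z - a) (α, β)) = 0 := by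
    intro a
    have k1 : Continuous fun z => fderiv ℝ f (z + a) (α, β) := cDf.comp (by fun_prop : Continuous fun z : ℝ × ℝ => z + a)
    have k2 : Continuous fun z => fderiv ℝ f (z - a) (α, β) := cDf.comp (by fun_prop : Continuous fun z : ℝ × ℝ => z - a)
    have s1 : ∫ z in S, f z * fderiv ℝ f (z - a) (α, β)
        = ∫ z in S, f (z + a) * fderiv ℝ f z (α, β) := by
      rw [← rlw_shift L₁ L₂ hL₁ hL₂ (fun z => f z * fderiv ℝ f (z - a) (α, β)) (by fun_prop) _ a]
      · simp only [add_sub_cancel_right, hSdef]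
      · constructor
        · intro x y
          obtain ⟨p, q⟩ := a
          have := pDf.1 (x - p) (y - q)
          simp only [Prod.mk_sub_mk, pf.1, add_sub_right_comm, this]
        · intro x y
          obtain ⟨p, q⟩ := a
          have := pDf.2 (x - p) (y - q)
          simp only [Prod.mk_sub_mk, pf.2, add_sub_right_comm, this]
    have hfa : ContDiff ℝ (⊤ : ℕ∞) (fun z => f (z + a)) := hf.comp (contDiff_id.add contDiff_const)
    have dv := rlw_div L₁ L₂ hL₁ hL₂ (fun z => f z * f (z + a)) (hf.mul hfa) (by
      constructor
      · intro x y
        obtain ⟨p, q⟩ := a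
        simp only [Prod.mk_add_mk, pf.1, add_right_comm x L₁ p]
      · intro x y
        obtain ⟨p, q⟩ := a
        simp only [Prod.mk_add_mk, pf.2, add_right_comm y L₂ q]) (α, β)
    have fd : ∀ z, fderiv ℝ (fun z => f z * f (z + a)) z (α, β)
        = f z * fderiv ℝ f (z + a) (α, β) + f (z + a) * fderiv ℝ f z (α, β) := by
      intro z
      rw [fderiv_fun_mul (hf.differentiable (by simp) _) (hfa.differentiable (by simp) _),
        fderiv_comp_add_right]
      simp
    simp_rw [fd] at dv
    rw [integral_add (intg _ (by fun_prop)) (intg _ (by fun_prop))] at dv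
    simp_rw [mul_add]
    rw [integral_add (intg _ (by fun_prop)) (intg _ (by fun_prop)), s1]
    exact dv
  have heq : ∀ a, E a = μ * E2 (1, 0) a + θ * E2 (0, 1) a := by
    intro a
    have cc : ∀ e : ℝ × ℝ, Continuous fun z => f z * (fderiv ℝ (fun z => fderiv ℝ w z e) (z + a) e
      + (-(-1)) * fderiv ℝ (fun z => fderiv ℝ w z e) (z - a) e) := by
      intro e
      have c := (rlw_smooth _ (rlw_smooth w hw e) e).continuous
      have k1 := c.comp (by fun_prop : Continuous fun z : ℝ × ℝ => z + a)
      have k2 := c.comp (by fun_prop : Continuous fun z : ℝ × ℝ => z - a)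
      exact cf.mul (k1.add (continuous_const.mul k2))
    have k1 : Continuous fun z => fderiv ℝ f (z + a) (α, β) := cDf.comp (by fun_prop : Continuous fun z : ℝ × ℝ => z + a)
    have k2 : Continuous fun z => fderiv ℝ f (z - a) (α, β) := cDf.comp (by fun_prop : Continuous fun z : ℝ × ℝ => z - a)
    have i1 := (intg _ (cc (1, 0))).const_mul μ
    have i2 := (intg _ (cc (0, 1))).const_mul θ
    have i3 : IntegrableOn (fun z => f z * (fderiv ℝ f (z + a) (α, β)
      + fderiv ℝ f (z - a) (α, β))) S := intg _ (by fun_prop)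
    simp only [E, E2]
    have h3 := integral_sub (i1.add i2) i3
    rw [forcing a, sub_zero] at h3
    rw [← MeasureTheory.integral_const_mul, ← MeasureTheory.integral_const_mul,
      ← integral_add i1 i2]
    refine Eq.trans ?_ h3
    refine integral_congr_ae (Eventually.of_forall fun z => ?_)
    simp only [Pi.add_apply]
    linear_combination f z * hpde (z + a) + f z * hpde (z - a)
  have le := rlw_maxprin μ θ L₁ L₂ hμ hθ hL₁ hL₂ E E1 E2 hEc hEp h1 h2 heq 0
  have ge := rlw_maxprin μ θ L₁ L₂ hμ hθ hL₁ hL₂ (fun a => - E a) (fun e a => - E1 e a)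
    (fun e a => - E2 e a) hEc.neg
    ⟨fun x y => by simp only [hEp.1], fun x y => by simp only [hEp.2]⟩
    (fun a e s => (h1 a e s).neg) (fun a e s => (h2 a e s).neg)
    (fun a => by simp only [heq a]; ring) 0
  have e0 : E 0 = 2 * ∫ z in S, f z * w z := by
    rw [← MeasureTheory.integral_const_mul]
    refine integral_congr_ae (Eventually.of_forall fun z => ?_)
    simp; ring
  have ge' : - E 0 ≤ 0 := ge
  linarith

lemma rlw_line3 (g : ℝ × ℝ × ℝ → ℝ) (hg : ContDiff ℝ (⊤ : ℕ∞) g) (c : ℝ → ℝ × ℝ × ℝ)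
    (e : ℝ × ℝ × ℝ) (s : ℝ) (hc : HasDerivAt c e s) :
    HasDerivAt (fun s => g (c s)) (fderiv ℝ g (c s) e) s :=
  (hg.differentiable (by simp) (c s)).hasFDerivAt.comp_hasDerivAt s hc

lemma rlw_comm (g : ℝ × ℝ × ℝ → ℝ) (hg : ContDiff ℝ (⊤ : ℕ∞) g) (e e' : ℝ × ℝ × ℝ) :
    (fun p => fderiv ℝ (fun q => fderiv ℝ g q e) p e')
      = fun p => fderiv ℝ (fun q => fderiv ℝ g q e') p e := by
  funext p
  have hd : DifferentiableAt ℝ (fderiv ℝ g) p :=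
    (hg.fderiv_right (m := (⊤ : ℕ∞)) (by simp)).differentiable (by simp) p
  have hs : IsSymmSndFDerivAt ℝ g p := hg.contDiffAt.isSymmSndFDerivAt (by
    simp only [minSmoothness_of_isRCLikeNormedField]; exact WithTop.coe_le_coe.2 (le_top : (2 : ℕ∞) ≤ ⊤))
  have k : ∀ v v' : ℝ × ℝ × ℝ, fderiv ℝ (fun q => fderiv ℝ g q v) p v'
      = fderiv ℝ (fderiv ℝ g) p v' v := by
    intro v v'
    rw [fderiv_clm_apply hd (differentiableAt_const v)]
    simp
  rw [k, k]
  exact hs.eq _ _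

lemma rlw_slice (g : ℝ × ℝ × ℝ → ℝ) (hg : ContDiff ℝ (⊤ : ℕ∞) g) (t : ℝ) (z e : ℝ × ℝ) :
    fderiv ℝ (fun z => g (t, z)) z e = fderiv ℝ g (t, z) (0, e) := by
  have h2 : HasFDerivAt (fun z : ℝ × ℝ => (t, z)) (ContinuousLinearMap.inr ℝ ℝ (ℝ × ℝ)) z :=
    hasFDerivAt_prodMk_right t z
  have := ((hg.differentiable (by simp) (t, z)).hasFDerivAt).comp z h2
  have e2 := this.fderiv
  change fderiv ℝ (fun z => g (t, z)) z = _ at e2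
  rw [e2]
  simp

/-- Hamiltonian energy conservation for the 2D regularized long-wave equation. -/
theorem rlw2d_energy_conservation
    (α β μ θ L₁ L₂ : ℝ) (hα : 0 < α) (hβ : 0 < β) (hμ : 0 < μ) (hθ : 0 < θ)
    (hL₁ : 0 < L₁) (hL₂ : 0 < L₂)
    (u : ℝ → ℝ → ℝ → ℝ)
    (hsmooth : ContDiff ℝ (⊤ : ℕ∞) (fun p : ℝ × ℝ × ℝ => u p.1 p.2.1 p.2.2))
    (hperx : ∀ t x y, u t (x + L₁) y = u t x y)
    (hpery : ∀ t x y, u t x (y + L₂) = u t x y)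
    (hpde : ∀ t x y,
      deriv (fun s => u s x y) t
        + α * deriv (fun a => u t a y) x
        + β * deriv (fun b => u t x b) y
        + α * u t x y * deriv (fun a => u t a y) x
        + β * u t x y * deriv (fun b => u t x b) y
        - μ * deriv (fun s => deriv (fun a => deriv (fun a' => u s a' y) a) x) t
        - θ * deriv (fun s => deriv (fun b => deriv (fun b' => u s x b') b) y) t = 0) :
    ∀ t₁ t₂ : ℝ,
      (∫ x in (0:ℝ)..L₁, ∫ y in (0:ℝ)..L₂,
        ((1/2) * (u t₁ x y)^2 + (1/6) * (u t₁ x y)^3))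
      = ∫ x in (0:ℝ)..L₁, ∫ y in (0:ℝ)..L₂,
        ((1/2) * (u t₂ x y)^2 + (1/6) * (u t₂ x y)^3) := by
  set U : ℝ × ℝ × ℝ → ℝ := fun p => u p.1 p.2.1 p.2.2 with hU
  let et : ℝ × ℝ × ℝ := (1, 0, 0)
  let ex : ℝ × ℝ × ℝ := (0, 1, 0)
  let ey : ℝ × ℝ × ℝ := (0, 0, 1)
  have Dt : ∀ g : ℝ × ℝ × ℝ → ℝ, ContDiff ℝ (⊤ : ℕ∞) g → ∀ t x y,
      HasDerivAt (fun s => g (s, x, y)) (fderiv ℝ g (t, x, y) et) t := fun g hg t x y =>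
    rlw_line3 g hg (fun s => (s, x, y)) et t
      ((hasDerivAt_id t).prodMk ((hasDerivAt_const t x).prodMk (hasDerivAt_const t y)))
  have Dx : ∀ g : ℝ × ℝ × ℝ → ℝ, ContDiff ℝ (⊤ : ℕ∞) g → ∀ t x y,
      deriv (fun a => g (t, a, y)) x = fderiv ℝ g (t, x, y) ex := fun g hg t x y =>
    (rlw_line3 g hg (fun a => (t, a, y)) ex x
      ((hasDerivAt_const x t).prodMk ((hasDerivAt_id x).prodMk (hasDerivAt_const x y)))).deriv
  have Dy : ∀ g : ℝ × ℝ × ℝ → ℝ, ContDiff ℝ (⊤ : ℕ∞) g → ∀ t x y,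
      deriv (fun b => g (t, x, b)) y = fderiv ℝ g (t, x, y) ey := fun g hg t x y =>
    (rlw_line3 g hg (fun b => (t, x, b)) ey y
      ((hasDerivAt_const y t).prodMk ((hasDerivAt_const y x).prodMk (hasDerivAt_id y)))).deriv
  have sm := fun e => rlw_smooth U hsmooth e
  have sm2 := fun e e' => rlw_smooth _ (sm e) e'
  let W : ℝ × ℝ × ℝ → ℝ := fun p => fderiv ℝ U p et
  have hW : ContDiff ℝ (⊤ : ℕ∞) W := sm et
  have Ux : ∀ t x y, deriv (fun a => u t a y) x = fderiv ℝ U (t, x, y) ex := Dx U hsmooth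
  have Uy : ∀ t x y, deriv (fun a => u t x a) y = fderiv ℝ U (t, x, y) ey := Dy U hsmooth
  have Ut : ∀ t x y, deriv (fun s => u s x y) t = W (t, x, y) :=
    fun t x y => (Dt U hsmooth t x y).deriv
  have swap : ∀ e, (fun p => fderiv ℝ (fun q => fderiv ℝ (fun r => fderiv ℝ U r e) q e) p et)
      = fun p => fderiv ℝ (fun q => fderiv ℝ W q e) p e := by
    intro e
    rw [rlw_comm _ (sm e) e et, rlw_comm U hsmooth e et]
  have pde : ∀ t x y, W (t, x, y) + α * fderiv ℝ U (t, x, y) ex + β * fderiv ℝ U (t, x, y) ey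
      + α * U (t, x, y) * fderiv ℝ U (t, x, y) ex + β * U (t, x, y) * fderiv ℝ U (t, x, y) ey
      - μ * fderiv ℝ (fun q => fderiv ℝ W q ex) (t, x, y) ex
      - θ * fderiv ℝ (fun q => fderiv ℝ W q ey) (t, x, y) ey = 0 := by
    intro t x y
    have h := hpde t x y
    simp_rw [Ux, Uy, Ut] at h
    have a1 : ∀ s x, deriv (fun a => fderiv ℝ U (s, a, y) ex) x = _ :=
      fun s x => Dx _ (sm ex) s x y
    have a2 : ∀ s y, deriv (fun a => fderiv ℝ U (s, x, a) ey) y = _ :=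
      fun s y => Dy _ (sm ey) s x y
    simp_rw [a1, a2] at h
    have b1 := (Dt _ (sm2 ex ex) t x y).deriv
    have b2 := (Dt _ (sm2 ey ey) t x y).deriv
    rw [b1, b2] at h
    have c1 := congrFun (swap ex) (t, x, y)
    have c2 := congrFun (swap ey) (t, x, y)
    rw [c1, c2] at h
    exact h
  have cU := hsmooth.continuous
  have cW := hW.continuous
  have der : ∀ t, HasDerivAt (fun t => ∫ z in rlwCell L₁ L₂,
      ((1/2) * (U (t, z))^2 + (1/6) * (U (t, z))^3)) 0 t := by
    intro t
    have h := rlw_hasDerivAt (rlwCell L₁ L₂) (rlwCell_compact _ _)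
      (fun t z => (1/2) * (U (t, z))^2 + (1/6) * (U (t, z))^3)
      (fun t z => (U (t, z) + (1/2) * (U (t, z))^2) * W (t, z)) (by fun_prop) (by fun_prop)
      (fun s z => by
        have d := Dt U hsmooth s z.1 z.2
        refine HasDerivAt.congr_deriv
          (((d.pow 2).const_mul (1/2)).add ((d.pow 3).const_mul (1/6))) ?_
        simp only [W, Prod.mk.eta]
        push_cast
        ring) t
    have sl : ContDiff ℝ (⊤ : ℕ∞) fun z : ℝ × ℝ => U (t, z) :=
      hsmooth.comp (contDiff_const.prodMk contDiff_id)
    have slW : ContDiff ℝ (⊤ : ℕ∞) fun z : ℝ × ℝ => W (t, z) :=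
      hW.comp (contDiff_const.prodMk contDiff_id)
    have core := rlw_core α β μ θ L₁ L₂ hμ hθ hL₁ hL₂
      (fun z => U (t, z) + (1/2) * (U (t, z))^2) (fun z => W (t, z))
      (sl.add (contDiff_const.mul (sl.pow 2))) slW
      ⟨fun x y => by simp [hU, hperx], fun x y => by simp [hU, hpery]⟩
      ⟨fun x y => by simp_rw [← Ut, hperx], fun x y => by simp_rw [← Ut, hpery]⟩
      (by
        rintro ⟨x, y⟩
        simp_rw [rlw_slice W hW]
        have q1 := rlw_slice _ (rlw_smooth W hW ex) t (x, y) (1, 0)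
        have q2 := rlw_slice _ (rlw_smooth W hW ey) t (x, y) (0, 1)
        have sd : DifferentiableAt ℝ (fun z : ℝ × ℝ => U (t, z)) (x, y) :=
          sl.differentiable (by simp) _
        have q3 : fderiv ℝ (fun z => U (t, z) + (1/2) * (U (t, z))^2) (x, y) (α, β)
            = (1 + U (t, x, y)) * (α * fderiv ℝ U (t, x, y) ex
              + β * fderiv ℝ U (t, x, y) ey) := by
          have hd := sd.hasFDerivAt.add ((sd.hasFDerivAt.pow 2).const_mul (1/2))
          have e1 : fderiv ℝ (fun z => U (t, z) + (1/2) * (U (t, z))^2) (x, y) = _ := hd.fderiv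
          have e2 : ((0, α, β) : ℝ × ℝ × ℝ) = α • ex + β • ey := by simp [ex, ey]
          rw [e1]
          simp only [_root_.add_apply, _root_.smul_apply,
            rlw_slice U hsmooth, e2, map_add, map_smul, smul_eq_mul]
          simp
          ring
        rw [q3]
        have := pde t x y
        simp only [ex, ey] at q1 q2 this ⊢
        rw [q1, q2]
        linear_combination this)
    rw [core] at h
    exact h
  intro t₁ t₂
  have hc := is_const_of_deriv_eq_zero (fun t => (der t).differentiableAt)
    (fun t => (der t).deriv) t₁ t₂
  rw [rlw_iter L₁ L₂ hL₁ hL₂ _ (by fun_prop), rlw_iter L₁ L₂ hL₁ hL₂ _ (by fun_prop)] at hc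
  exact hc
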